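/- Let q = √(3 + 2√2 − 2√(4 + 3√2)) and a = 2^(1/4) − 1. For x ∈ [0, a] set c₁(x) = √(q² − x²) and c₂(x) = √((1/sin(π/8))² − (x + cos(π/8)/sin(π/8))²). Then ∫₀ᵃ (∫_{c₁(x)}^{c₂(x)} [ (2y − √(1 − 22·x²) − 1 − √(q² − x²))² + ( x·(y − √(1 − 22·x²) − 1)/√(q² − x²) + 22·x·(y − √(q² − x²))/√(1 − 22·x²) )² ] dy) dx < 116469/1000000. -/

import Mathlib

/-!
Both components of `∇φ₁` are affine in `y`, so the inner integral is explicit, and there remains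
one integral over `x` of an expression in nested square roots. On each of twelve cells this
expression is enclosed by a polynomial, with coefficients and error rounded to multiples of
`2 ^ (-40)`, which is integrated exactly. The only operation that is not a ring operation, `1 / √g`,
is enclosed by means of a positive candidate `y`: the size of the residual `g y² - 1` bounds the
distance from `y` to `1 / √g`, however `y` was found. The bounds so obtained add up to about
`5 · 10⁻⁷` less than the claimed constant.
-/

open intervalIntegral

/-- Univariate polynomials with integer coefficients, lowest degree first. Unlike `Polynomial ℤ`
they can be evaluated by the kernel. -/
abbrev CoeffList := List ℤ

namespace CoeffList

/-- The value of a coefficient list at a real point, by Horner's scheme. -/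
noncomputable def eval (p : CoeffList) (t : ℝ) : ℝ := p.foldr (fun a y => a + t * y) 0

/-- Sum of polynomials. -/
def add : CoeffList → CoeffList → CoeffList
  | [], q => q
  | p, [] => p
  | a :: p, b :: q => (a + b) :: add p q

/-- Integer multiple of a polynomial. -/
def smul (c : ℤ) (p : CoeffList) : CoeffList := p.map (c * ·)

/-- Difference of polynomials. -/
def sub (p q : CoeffList) : CoeffList := p.add (q.smul (-1))

/-- Product of polynomials. -/
def mul (p q : CoeffList) : CoeffList := p.foldr (fun a r => (q.smul a).add (0 :: r)) []

/-- The `ℓ¹` norm of the coefficients, which bounds the polynomial on `[-1, 1]`. -/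
def norm (p : CoeffList) : ℕ := (p.map Int.natAbs).sum

/-- The polynomial `p / n` with coefficients rounded down and terms of degree above `d` dropped. -/
def divTrunc (d n : ℕ) (p : CoeffList) : CoeffList := (p.take (d + 1)).map (· / (n : ℤ))

/-- The integral `∫ t in -1..1, t ^ k * p t`. -/
def momentIntegral : ℕ → CoeffList → ℚ
  | _, [] => 0
  | k, a :: p => a * ((1 - (-1) ^ (k + 1)) / (k + 1)) + momentIntegral (k + 1) p

@[simp]
theorem eval_nil (t : ℝ) : eval [] t = 0 := rfl

@[simp]
theorem eval_cons (a : ℤ) (p : CoeffList) (t : ℝ) : eval (a :: p) t = a + t * eval p t := rfl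

theorem eval_add (p q : CoeffList) (t : ℝ) : (p.add q).eval t = p.eval t + q.eval t := by
  induction p generalizing q with
  | nil => simp [add]
  | cons a p ih =>
    cases q with
    | nil => simp [add]
    | cons b q =>
      simp only [add, eval_cons, ih, Int.cast_add]
      ring

theorem eval_smul (c : ℤ) (p : CoeffList) (t : ℝ) : (p.smul c).eval t = c * p.eval t := by
  induction p with
  | nil => simp [smul]
  | cons a p ih =>
    simp only [smul, List.map_cons, eval_cons, Int.cast_mul] at ih ⊢
    rw [ih]
    ring

theorem eval_sub (p q : CoeffList) (t : ℝ) : (p.sub q).eval t = p.eval t - q.eval t := by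
  simp [sub, eval_add, eval_smul, sub_eq_add_neg]

theorem eval_mul (p q : CoeffList) (t : ℝ) : (p.mul q).eval t = p.eval t * q.eval t := by
  induction p with
  | nil => simp [mul]
  | cons a p ih =>
    simp only [mul, List.foldr_cons, eval_add, eval_smul, eval_cons] at ih ⊢
    rw [ih]
    push_cast
    ring

theorem abs_eval_le_norm (p : CoeffList) {t : ℝ} (ht : |t| ≤ 1) : |p.eval t| ≤ p.norm := by
  induction p with
  | nil => simp
  | cons a p ih =>
    calc |(a : ℝ) + t * eval p t|
        ≤ |(a : ℝ)| + |t| * |eval p t| := (abs_add_le _ _).trans_eq (by rw [abs_mul])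
      _ ≤ |(a : ℝ)| + 1 * norm p := by gcongr
      _ = norm (a :: p) := by simp [norm, Nat.cast_natAbs]

theorem headD_sub_norm_tail_le_eval (p : CoeffList) {t : ℝ} (ht : |t| ≤ 1) :
    (p.headD 0 : ℝ) - norm p.tail ≤ p.eval t := by
  cases p with
  | nil => simp [norm]
  | cons a p =>
    have hp : |t * eval p t| ≤ 1 * norm p := by
      rw [abs_mul]
      gcongr
      exact abs_eval_le_norm p ht
    simp only [List.headD_cons, List.tail_cons, eval_cons]
    linarith [(abs_le.mp hp).1]

theorem continuous_eval (p : CoeffList) : Continuous p.eval := by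
  induction p with
  | nil => exact continuous_const
  | cons a p ih => exact continuous_const.add (continuous_id.mul ih)

theorem integral_pow_mul_eval (k : ℕ) (p : CoeffList) :
    ∫ t in (-1 : ℝ)..1, t ^ k * p.eval t = p.momentIntegral k := by
  induction p generalizing k with
  | nil => simp [momentIntegral]
  | cons a p ih =>
    have hp := continuous_eval p
    have hsplit (t : ℝ) : t ^ k * eval (a :: p) t = a * t ^ k + t ^ (k + 1) * eval p t := by
      rw [eval_cons]
      ring
    simp only [hsplit]
    rw [integral_add (Continuous.intervalIntegrable (by fun_prop) _ _)
      (Continuous.intervalIntegrable (by fun_prop) _ _), ih, integral_const_mul, integral_pow,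
      one_pow, momentIntegral]
    push_cast
    rfl

/-- One Newton step `y ↦ y (3 - g y²) / 2` for `1 / √g`, truncated at degree `d`, where `g` and `y`
are given in units of `1 / s`. -/
def rsqrtNewtonStep (d s : ℕ) (g y : CoeffList) : CoeffList :=
  (y.mul (sub [3 * s] ((g.mul ((y.mul y).divTrunc d s)).divTrunc d s))).divTrunc d (2 * s)

/-- An approximation of `1 / √g` in units of `1 / s`. The constant `1 / (1 + g₀)` with which the
iteration starts lies below `1 / √g₀`, whence Newton's method converges. -/
def rsqrtApprox (d s : ℕ) (g : CoeffList) : CoeffList :=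
  (g.rsqrtNewtonStep d s)^[10] [s ^ 2 / (s + g.headD 0)]

end CoeffList

theorem abs_inv_sqrt_sub_le {x y δ : ℝ} (hy : 0 < y) (hδ : δ ≤ 1 / 2) (h : |x * y ^ 2 - 1| ≤ δ) :
    |(√x)⁻¹ - y| ≤ δ * y := by
  have hl := (abs_le.mp h).1
  have hx : 0 < x := by
    by_contra! hx
    nlinarith [mul_nonneg (neg_nonneg.mpr hx) (sq_nonneg y)]
  have hs : 0 < √x := Real.sqrt_pos.mpr hx
  set z := √x * y with hz
  have hzpos : 0 < z := mul_pos hs hy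
  have hzsq : x * y ^ 2 = z ^ 2 := by rw [hz, mul_pow, Real.sq_sqrt hx.le]
  rw [hzsq] at h hl
  have hone : 1 ≤ z * (1 + z) := by nlinarith
  have hfactor : ((√x)⁻¹ - y) * (z * (1 + z)) = -(y * (z ^ 2 - 1)) := by
    rw [hz]
    field_simp
    ring
  calc |(√x)⁻¹ - y| ≤ |(√x)⁻¹ - y| * (z * (1 + z)) := le_mul_of_one_le_right (abs_nonneg _) hone
    _ = |z ^ 2 - 1| * y := by
      rw [← abs_of_pos (by positivity : 0 < z * (1 + z)), ← abs_mul, hfactor, abs_neg, abs_mul,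
        abs_of_pos hy, mul_comm]
    _ ≤ δ * y := by gcongr

theorem abs_mul_inv_sqrt_sub_le {s x y δ : ℝ} (hs : 0 < s) (hy : 0 < y) (hδ : 2 * δ ≤ s ^ 3)
    (h : |s * x * y ^ 2 - s ^ 3| ≤ δ) : |s * (√x)⁻¹ - y| ≤ δ * y / s ^ 3 := by
  have hsmall : δ / s ^ 3 ≤ 1 / 2 := by
    rw [div_le_div_iff₀ (by positivity) two_pos]
    linarith
  have hscaled : |x * (y / s) ^ 2 - 1| ≤ δ / s ^ 3 := by
    have : x * (y / s) ^ 2 - 1 = (s * x * y ^ 2 - s ^ 3) / s ^ 3 := by field_simp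
    rw [this, abs_div, abs_of_pos (by positivity : 0 < s ^ 3)]
    gcongr
  calc |s * (√x)⁻¹ - y| = s * |(√x)⁻¹ - y / s| := by
        rw [← abs_of_pos hs, ← abs_mul, abs_of_pos hs, mul_sub, mul_div_cancel₀ _ hs.ne']
    _ ≤ s * (δ / s ^ 3 * (y / s)) := by
        gcongr
        exact abs_inv_sqrt_sub_le (by positivity) hsmall hscaled
    _ = δ * y / s ^ 3 := by field_simp

theorem cast_div_le_natDiv_add_one (m : ℕ) {n : ℕ} (hn : 0 < n) :
    (m : ℝ) / n ≤ (m / n + 1 : ℕ) := by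
  rw [div_le_iff₀ (by exact_mod_cast hn)]
  exact_mod_cast (Nat.lt_mul_div_succ m hn |>.le.trans_eq (mul_comm _ _))

/-- A Taylor model: a polynomial together with an error bound. The flag `valid` records whether the
side conditions of all operations that led to the model were met. -/
structure TaylorModel where
  coeffs : CoeffList
  error : ℕ
  valid : Bool

namespace TaylorModel

/-- The model `T`, if valid, describes `f` on `[-1, 1]` up to its error bound. -/
def Encloses (T : TaylorModel) (f : ℝ → ℝ) : Prop :=
  T.valid = true → ∀ t, |t| ≤ 1 → |f t - T.coeffs.eval t| ≤ T.error

instance : Add TaylorModel :=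
  ⟨fun S T => ⟨S.coeffs.add T.coeffs, S.error + T.error, S.valid && T.valid⟩⟩

instance : Sub TaylorModel :=
  ⟨fun S T => ⟨S.coeffs.sub T.coeffs, S.error + T.error, S.valid && T.valid⟩⟩

instance : Mul TaylorModel :=
  ⟨fun S T => ⟨S.coeffs.mul T.coeffs,
    S.coeffs.norm * T.error + T.coeffs.norm * S.error + S.error * T.error, S.valid && T.valid⟩⟩

/-- A polynomial as a Taylor model without error. -/
def ofCoeffs (p : CoeffList) : TaylorModel := ⟨p, 0, true⟩

/-- The model `T / n`, rounded to integer coefficients and truncated at degree `d`. -/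
def divTrunc (d n : ℕ) (T : TaylorModel) : TaylorModel :=
  let q := T.coeffs.divTrunc d n
  ⟨q, (T.error + (T.coeffs.sub (q.smul n)).norm) / n + 1, T.valid⟩

/-- A bound for the model on `[-1, 1]`. -/
def size (T : TaylorModel) : ℕ := T.coeffs.norm + T.error

/-- The candidate `y` as a model of `1 / √f`, where `T` is a model of `f`, both in units of `1 / s`;
the error bound is derived from the residual `f y² - 1`. -/
def rsqrt (s : ℕ) (y : CoeffList) (T : TaylorModel) : TaylorModel :=
  let δ := (T * ofCoeffs (y.mul y) - ofCoeffs [(s : ℤ) ^ 3]).size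
  ⟨y, δ * y.norm / s ^ 3 + 1,
    T.valid && (decide (2 * δ ≤ s ^ 3) && decide ((CoeffList.norm y.tail : ℤ) < y.headD 0))⟩

/-- An upper bound for the integral over `[-1, 1]`. -/
def integralBound (T : TaylorModel) : ℚ := T.coeffs.momentIntegral 0 + 2 * T.error

variable {S T : TaylorModel} {f g : ℝ → ℝ}

theorem Encloses.add (hf : S.Encloses f) (hg : T.Encloses g) :
    (S + T).Encloses fun t => f t + g t := by
  intro hv t ht
  obtain ⟨hS, hT⟩ := (Bool.and_eq_true _ _).mp hv
  change |f t + g t - (S.coeffs.add T.coeffs).eval t| ≤ (S.error + T.error : ℕ)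
  rw [CoeffList.eval_add, add_sub_add_comm, Nat.cast_add]
  exact (abs_add_le _ _).trans (add_le_add (hf hS t ht) (hg hT t ht))

theorem Encloses.sub (hf : S.Encloses f) (hg : T.Encloses g) :
    (S - T).Encloses fun t => f t - g t := by
  intro hv t ht
  obtain ⟨hS, hT⟩ := (Bool.and_eq_true _ _).mp hv
  change |f t - g t - (S.coeffs.sub T.coeffs).eval t| ≤ (S.error + T.error : ℕ)
  rw [CoeffList.eval_sub, sub_sub_sub_comm, Nat.cast_add]
  exact (abs_sub _ _).trans (add_le_add (hf hS t ht) (hg hT t ht))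

theorem Encloses.mul (hf : S.Encloses f) (hg : T.Encloses g) :
    (S * T).Encloses fun t => f t * g t := by
  intro hv t ht
  obtain ⟨hS, hT⟩ := (Bool.and_eq_true _ _).mp hv
  change |f t * g t - (S.coeffs.mul T.coeffs).eval t| ≤
    (S.coeffs.norm * T.error + T.coeffs.norm * S.error + S.error * T.error : ℕ)
  have hp := CoeffList.abs_eval_le_norm S.coeffs ht
  have hq := CoeffList.abs_eval_le_norm T.coeffs ht
  have hf' := hf hS t ht
  have hg' := hg hT t ht
  set p := S.coeffs.eval t
  set q := T.coeffs.eval t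
  calc |f t * g t - (S.coeffs.mul T.coeffs).eval t|
      = |p * (g t - q) + q * (f t - p) + (f t - p) * (g t - q)| := by
        rw [CoeffList.eval_mul, show f t * g t - p * q =
          p * (g t - q) + q * (f t - p) + (f t - p) * (g t - q) by ring]
    _ ≤ |p| * |g t - q| + |q| * |f t - p| + |f t - p| * |g t - q| := by
        simpa only [← abs_mul] using abs_add_three _ _ _
    _ ≤ (S.coeffs.norm * T.error + T.coeffs.norm * S.error + S.error * T.error : ℕ) := by
        push_cast
        gcongr

theorem encloses_ofCoeffs (p : CoeffList) : (ofCoeffs p).Encloses p.eval := by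
  intro _ t _
  simp [ofCoeffs]

theorem Encloses.divTrunc (d : ℕ) {n : ℕ} (hn : 0 < n) (h : T.Encloses fun t => n * f t) :
    (T.divTrunc d n).Encloses f := by
  intro hv t ht
  have hn' : (0 : ℝ) < n := by exact_mod_cast hn
  set q := T.coeffs.divTrunc d n
  have hround : |T.coeffs.eval t - n * q.eval t| ≤ (T.coeffs.sub (q.smul n)).norm := by
    simpa [CoeffList.eval_sub, CoeffList.eval_smul] using
      CoeffList.abs_eval_le_norm (T.coeffs.sub (q.smul n)) ht
  have htotal : n * |f t - q.eval t| ≤ (T.error + (T.coeffs.sub (q.smul n)).norm : ℕ) :=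
    calc n * |f t - q.eval t|
        = |n * f t - n * q.eval t| := by rw [← mul_sub, abs_mul, abs_of_pos hn']
      _ ≤ |n * f t - T.coeffs.eval t| + |T.coeffs.eval t - n * q.eval t| := abs_sub_le _ _ _
      _ ≤ _ := by
        push_cast
        exact add_le_add (h hv t ht) hround
  calc |f t - q.eval t|
      ≤ (T.error + (T.coeffs.sub (q.smul n)).norm : ℕ) / n := by rwa [le_div_iff₀' hn']
    _ ≤ _ := cast_div_le_natDiv_add_one _ hn

theorem Encloses.abs_le_size (h : T.Encloses f) (hv : T.valid = true) {t : ℝ} (ht : |t| ≤ 1) :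
    |f t| ≤ T.size := by
  have hp := CoeffList.abs_eval_le_norm T.coeffs ht
  rw [size, Nat.cast_add]
  linarith [h hv t ht, abs_sub_abs_le_abs_sub (f t) (T.coeffs.eval t)]

theorem Encloses.rsqrt {s : ℕ} (hs : 0 < s) (y : CoeffList) (h : T.Encloses fun t => s * f t) :
    (T.rsqrt s y).Encloses fun t => s * (√(f t))⁻¹ := by
  intro hv t ht
  simp only [TaylorModel.rsqrt, Bool.and_eq_true, decide_eq_true_eq] at hv ⊢
  obtain ⟨hT, hδ, hy⟩ := hv
  have hvalid : (T * ofCoeffs (y.mul y) - ofCoeffs [(s : ℤ) ^ 3]).valid = true := by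
    change ((T.valid && true) && true) = true
    simp [hT]
  have hres := ((h.mul (encloses_ofCoeffs (y.mul y))).sub
    (encloses_ofCoeffs [(s : ℤ) ^ 3])).abs_le_size hvalid ht
  simp only [CoeffList.eval_mul, CoeffList.eval_cons, CoeffList.eval_nil, Int.cast_pow,
    Int.cast_natCast, mul_zero, add_zero, ← pow_two] at hres
  set δ := (T * ofCoeffs (y.mul y) - ofCoeffs [(s : ℤ) ^ 3]).size
  have hypos : 0 < y.eval t := by
    have : (CoeffList.norm y.tail : ℝ) < y.headD 0 := by exact_mod_cast hy
    linarith [CoeffList.headD_sub_norm_tail_le_eval y ht]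
  have hynorm : y.eval t ≤ y.norm := (le_abs_self _).trans (CoeffList.abs_eval_le_norm y ht)
  calc |s * (√(f t))⁻¹ - y.eval t|
      ≤ δ * y.eval t / (s : ℝ) ^ 3 :=
        abs_mul_inv_sqrt_sub_le (by exact_mod_cast hs) hypos (by exact_mod_cast hδ) hres
    _ ≤ ((δ * y.norm : ℕ) : ℝ) / (s ^ 3 : ℕ) := by
        push_cast
        gcongr
    _ ≤ _ := cast_div_le_natDiv_add_one _ (by positivity)

theorem Encloses.intervalIntegrable (h : T.Encloses f) (hv : T.valid = true) (hf : Measurable f) :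
    IntervalIntegrable f MeasureTheory.volume (-1) 1 := by
  rw [intervalIntegrable_iff_integrableOn_Ioc_of_le (by norm_num)]
  refine MeasureTheory.Measure.integrableOn_of_bounded (M := T.size) (by simp)
    hf.aestronglyMeasurable ?_
  filter_upwards [MeasureTheory.ae_restrict_mem measurableSet_Ioc] with t ht
  exact h.abs_le_size hv (abs_le.mpr ⟨ht.1.le, ht.2⟩)

theorem Encloses.integral_le (h : T.Encloses f) (hv : T.valid = true) (hf : Measurable f) :
    ∫ t in (-1 : ℝ)..1, f t ≤ T.integralBound := by
  have hp := CoeffList.continuous_eval T.coeffs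
  calc ∫ t in (-1 : ℝ)..1, f t
      ≤ ∫ t in (-1 : ℝ)..1, (t ^ 0 * T.coeffs.eval t + T.error) := by
        refine integral_mono_on (by norm_num) (h.intervalIntegrable hv hf)
          (Continuous.intervalIntegrable (by fun_prop) _ _) fun t ht => ?_
        linarith [(abs_le.mp (h hv t (abs_le.mpr ht))).2]
    _ = T.integralBound := by
        rw [integral_add (Continuous.intervalIntegrable (by fun_prop) _ _) (by simp),
          CoeffList.integral_pow_mul_eval, integral_const, integralBound]
        push_cast
        norm_num

end TaylorModel

/-- Expressions in one real variable built from rational constants by ring operations and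
reciprocal square roots; `rsqrt e` stands for `1 / √e`. -/
inductive RadicalExpr
  | var
  | const (c : ℚ)
  | add (e f : RadicalExpr)
  | sub (e f : RadicalExpr)
  | mul (e f : RadicalExpr)
  | rsqrt (e : RadicalExpr)

namespace RadicalExpr

instance : Add RadicalExpr := ⟨add⟩

instance : Sub RadicalExpr := ⟨sub⟩

instance : Mul RadicalExpr := ⟨mul⟩

instance (n : ℕ) : OfNat RadicalExpr n := ⟨const n⟩

/-- The square root `√e`, which is `e / √e` even where `e` is not positive. -/
def sqrt (e : RadicalExpr) : RadicalExpr := e * rsqrt e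

/-- The real function denoted by an expression. -/
noncomputable def eval : RadicalExpr → ℝ → ℝ
  | var, t => t
  | const c, _ => c
  | add e f, t => e.eval t + f.eval t
  | sub e f, t => e.eval t - f.eval t
  | mul e f, t => e.eval t * f.eval t
  | rsqrt e, t => (√(e.eval t))⁻¹

section eval

variable (e f : RadicalExpr) (t : ℝ)

@[simp]
theorem eval_var : var.eval t = t := rfl

@[simp]
theorem eval_const (c : ℚ) : (const c).eval t = c := rfl

@[simp]
theorem eval_ofNat (n : ℕ) : eval ofNat(n) t = n := Rat.cast_natCast n

@[simp]
theorem eval_add : (e + f).eval t = e.eval t + f.eval t := rfl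

@[simp]
theorem eval_sub : (e - f).eval t = e.eval t - f.eval t := rfl

@[simp]
theorem eval_mul : (e * f).eval t = e.eval t * f.eval t := rfl

@[simp]
theorem eval_rsqrt : (rsqrt e).eval t = (√(e.eval t))⁻¹ := rfl

@[simp]
theorem eval_sqrt : (sqrt e).eval t = √(e.eval t) := Real.div_sqrt

end eval

theorem measurable_eval (e : RadicalExpr) : Measurable e.eval := by
  induction e with
  | var => exact measurable_id
  | const c => exact measurable_const
  | add e f he hf => exact he.add hf
  | sub e f he hf => exact he.sub hf
  | mul e f he hf => exact he.mul hf
  | rsqrt e he => exact he.sqrt.inv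

/-- A Taylor model of degree `d` for `t ↦ e (m + h t)`, in units of `1 / s`. -/
def model (d s : ℕ) (m h : ℚ) : RadicalExpr → TaylorModel
  | var => ⟨[⌊s * m⌋, ⌊s * h⌋], 2, true⟩
  | const c => ⟨[⌊s * c⌋], 1, true⟩
  | add e f => e.model d s m h + f.model d s m h
  | sub e f => e.model d s m h - f.model d s m h
  | mul e f => (e.model d s m h * f.model d s m h).divTrunc d s
  | rsqrt e => let T := e.model d s m h; T.rsqrt s (T.coeffs.rsqrtApprox d s)

theorem abs_mul_sub_floor_le (s : ℕ) (c : ℚ) : |(s * c : ℝ) - ⌊s * c⌋| ≤ 1 := by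
  have hcast : (s * c : ℝ) = (s * c : ℚ) := by push_cast; rfl
  rw [hcast, ← Rat.floor_cast (α := ℝ), Int.self_sub_floor, Int.abs_fract]
  exact (Int.fract_lt_one _).le

theorem encloses_model (d : ℕ) {s : ℕ} (hs : 0 < s) (m h : ℚ) (e : RadicalExpr) :
    (e.model d s m h).Encloses fun t => s * e.eval (m + h * t) := by
  induction e with
  | var =>
    intro _ t ht
    have hm := abs_mul_sub_floor_le s m
    have hh : |t| * |(s * h : ℝ) - ⌊s * h⌋| ≤ 1 :=
      mul_le_one₀ ht (abs_nonneg _) (abs_mul_sub_floor_le s h)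
    calc |s * (m + h * t) - CoeffList.eval [⌊s * m⌋, ⌊s * h⌋] t|
        = |(s * m - ⌊s * m⌋) + t * (s * h - ⌊s * h⌋)| := by
          simp only [CoeffList.eval_cons, CoeffList.eval_nil]
          ring_nf
      _ ≤ |(s * m : ℝ) - ⌊s * m⌋| + |t| * |(s * h : ℝ) - ⌊s * h⌋| :=
          (abs_add_le _ _).trans_eq (by rw [abs_mul])
      _ ≤ (2 : ℕ) := by
          push_cast
          linarith
  | const c =>
    intro _ t _
    simpa [model] using abs_mul_sub_floor_le s c
  | add e f he hf => simpa only [eval, model, mul_add] using he.add hf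
  | sub e f he hf => simpa only [eval, model, mul_sub] using he.sub hf
  | mul e f he hf =>
    refine TaylorModel.Encloses.divTrunc d hs ?_
    convert he.mul hf using 2 with t
    simp only [eval]
    ring
  | rsqrt e he => exact he.rsqrt hs _

/-- The Taylor model of `e` on the cell `[l, r]`, reparametrized by `[-1, 1]`. -/
def cellModel (e : RadicalExpr) (d s : ℕ) (l r : ℚ) : TaylorModel :=
  e.model d s ((l + r) / 2) ((r - l) / 2)

/-- The upper bound for the integral of `e` over `[l, r]` read off from its Taylor model. -/
def cellBound (e : RadicalExpr) (d s : ℕ) (l r : ℚ) : ℚ :=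
  (r - l) / (2 * s) * (e.cellModel d s l r).integralBound

section integral

variable {e : RadicalExpr} {d s : ℕ} (hs : 0 < s)
include hs

theorem intervalIntegrable_eval {l r : ℚ} (hlr : l < r) (hv : (e.cellModel d s l r).valid = true) :
    IntervalIntegrable e.eval MeasureTheory.volume l r := by
  have hs' : (s : ℝ) ≠ 0 := by exact_mod_cast hs.ne'
  have hlr' : (r : ℝ) - l ≠ 0 := sub_ne_zero.mpr (by exact_mod_cast hlr.ne')
  have hcell := (encloses_model d hs ((l + r) / 2) ((r - l) / 2) e).intervalIntegrable hv
    (by have := e.measurable_eval; fun_prop)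
  convert ((hcell.comp_mul_left (c := 2 / ((r : ℝ) - l))).comp_sub_right
    (((l : ℝ) + r) / 2)).const_mul (s : ℝ)⁻¹ using 1
  · ext t
    rw [inv_mul_cancel_left₀ hs']
    congr 1
    push_cast
    field_simp
    ring
  all_goals
    field_simp
    ring

theorem integral_eval_le_cellBound {l r : ℚ} (hlr : l < r)
    (hv : (e.cellModel d s l r).valid = true) :
    ∫ t in (l : ℝ)..r, e.eval t ≤ e.cellBound d s l r := by
  have hs' : (s : ℝ) ≠ 0 := by exact_mod_cast hs.ne'
  set m := (l + r) / 2 with hm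
  set h := (r - l) / 2 with hh
  have hpos : 0 < h := half_pos (sub_pos.mpr hlr)
  have hscale : (0 : ℝ) ≤ h / s := div_nonneg (by exact_mod_cast hpos.le) s.cast_nonneg
  have hmeas : Measurable fun t : ℝ => s * e.eval (m + h * t) := by
    have := e.measurable_eval
    fun_prop
  calc ∫ t in (l : ℝ)..r, e.eval t
      = ∫ t in (m + h * (-1) : ℝ)..(m + h * 1), e.eval t := by
        congr 1 <;> rw [hm, hh] <;> push_cast <;> ring
    _ = (h / s) * ∫ t in (-1 : ℝ)..1, s * e.eval (m + h * t) := by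
        rw [integral_const_mul, ← mul_assoc, div_mul_cancel₀ _ hs', mul_integral_comp_add_mul]
    _ ≤ (h / s) * (e.cellModel d s l r).integralBound :=
        mul_le_mul_of_nonneg_left ((encloses_model d hs m h e).integral_le hv hmeas) hscale
    _ = e.cellBound d s l r := by
        rw [hh, cellBound]
        push_cast
        field_simp

theorem integral_eval_le_sum_cellBound {n : ℕ} {x : ℕ → ℚ} (hx : ∀ k < n, x k < x (k + 1))
    (hv : ∀ k < n, (e.cellModel d s (x k) (x (k + 1))).valid = true) :
    ∫ t in (x 0 : ℝ)..x n, e.eval t ≤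
      (∑ k ∈ Finset.range n, e.cellBound d s (x k) (x (k + 1)) : ℚ) := by
  rw [← sum_integral_adjacent_intervals (a := fun k => (x k : ℝ)) fun k hk =>
    intervalIntegrable_eval hs (hx k hk) (hv k hk), Rat.cast_sum]
  refine Finset.sum_le_sum fun k hk => ?_
  have hk := Finset.mem_range.mp hk
  exact integral_eval_le_cellBound hs (hx k hk) (hv k hk)

end integral

end RadicalExpr

namespace Bolza

/-- The complete homogeneous symmetric polynomial of degree two. -/
def hsymmTwo {R : Type*} [Add R] [Mul R] (u v : R) : R := u * u + u * v + v * v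

/-- The integral of `|∇φ₁|²` over a vertical segment: at abscissa `x`, the point `y` runs from `r`
to `c`, and `φ₁ = (y - s - 1) (y - r)` with `r = √(q² - x²)`, `s = √(1 - 22 x²)`. -/
noncomputable def dirichletSlice (x r s c : ℝ) : ℝ :=
  ∫ y in r..c, ((2 * y - s - 1 - r) ^ 2 + (x * (y - s - 1) / r + 22 * x * (y - r) / s) ^ 2)

/-- The inner integral at abscissa `x`, with `c₂ x = √(1 - x² - 2 (1 + √2) x)` by
`cot (π / 8) = 1 + √2`. -/
noncomputable def triangleSlice (q x : ℝ) : ℝ :=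
  dirichletSlice x √(q ^ 2 - x ^ 2) √(1 - 22 * x ^ 2) √(1 - x ^ 2 - 2 * (1 + √2) * x)

theorem integral_sq_mul_add (α β u v : ℝ) :
    ∫ y in u..v, (α * y + β) ^ 2 = (v - u) / 3 * hsymmTwo (α * u + β) (α * v + β) := by
  have hexpand (y : ℝ) : (α * y + β) ^ 2 = α ^ 2 * y ^ 2 + 2 * α * β * y + β ^ 2 := by ring
  simp only [hexpand]
  rw [integral_add (Continuous.intervalIntegrable (by fun_prop) _ _) (by simp),
    integral_add (Continuous.intervalIntegrable (by fun_prop) _ _)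
      (Continuous.intervalIntegrable (by fun_prop) _ _),
    integral_const_mul, integral_const_mul, integral_pow, integral_id, integral_const, hsymmTwo]
  simp only [smul_eq_mul]
  push_cast
  ring

theorem dirichletSlice_eq (x r s c : ℝ) :
    dirichletSlice x r s c = (c - r) / 3 * (hsymmTwo (r - (s + 1)) (2 * c - (s + 1) - r) +
      hsymmTwo (x * (r - (s + 1)) * r⁻¹)
        (x * (c - (s + 1)) * r⁻¹ + 22 * (x * (c - r) * s⁻¹))) := by
  have haffine (y : ℝ) : (2 * y - s - 1 - r) ^ 2 +
      (x * (y - s - 1) / r + 22 * x * (y - r) / s) ^ 2 = (2 * y + -(s + 1 + r)) ^ 2 +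
      ((x * r⁻¹ + 22 * x * s⁻¹) * y + -(x * (s + 1) * r⁻¹ + 22 * x * r * s⁻¹)) ^ 2 := by ring
  simp only [dirichletSlice, haffine]
  rw [integral_add (Continuous.intervalIntegrable (by fun_prop) _ _)
    (Continuous.intervalIntegrable (by fun_prop) _ _), integral_sq_mul_add, integral_sq_mul_add]
  simp only [hsymmTwo]
  ring

theorem two_rpow_one_div_four : (2 : ℝ) ^ ((1 : ℝ) / 4) = √√2 := by
  rw [Real.sqrt_eq_rpow, Real.sqrt_eq_rpow, ← Real.rpow_mul zero_le_two]
  norm_num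

theorem two_mul_sqrt_four_add_le : 2 * √(4 + 3 * √2) ≤ 3 + 2 * √2 := by
  have hsq : √2 ^ 2 = 2 := Real.sq_sqrt zero_le_two
  have : √(4 + 3 * √2) ≤ (3 + 2 * √2) / 2 := by
    rw [Real.sqrt_le_left (by positivity)]
    nlinarith
  linarith

theorem sin_pi_div_eight_pos : 0 < Real.sin (Real.pi / 8) :=
  Real.sin_pos_of_pos_of_lt_pi (by positivity) (by linarith [Real.pi_pos])

theorem cos_div_sin_pi_div_eight : Real.cos (Real.pi / 8) / Real.sin (Real.pi / 8) = 1 + √2 := by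
  have hangle : 2 * (Real.pi / 8) = Real.pi / 4 := by ring
  have hsin : 2 * Real.sin (Real.pi / 8) * Real.cos (Real.pi / 8) = √2 / 2 := by
    rw [← Real.sin_two_mul, hangle, Real.sin_pi_div_four]
  have hcos : 2 * Real.cos (Real.pi / 8) ^ 2 - 1 = √2 / 2 := by
    rw [← Real.cos_two_mul, hangle, Real.cos_pi_div_four]
  have hcospos : 0 < Real.cos (Real.pi / 8) :=
    Real.cos_pos_of_mem_Ioo ⟨by linarith [Real.pi_pos], by linarith [Real.pi_pos]⟩
  rw [div_eq_iff sin_pi_div_eight_pos.ne']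
  refine mul_left_cancel₀ hcospos.ne' ?_
  linear_combination hcos / 2 - (1 + √2) / 2 * hsin - Real.sq_sqrt zero_le_two / 4

theorem one_div_sin_sq_sub_add_cot_sq {θ : ℝ} (hθ : Real.sin θ ≠ 0) (x : ℝ) :
    (1 / Real.sin θ) ^ 2 - (x + Real.cos θ / Real.sin θ) ^ 2 =
      1 - x * x - 2 * (Real.cos θ / Real.sin θ) * x := by
  field_simp
  linear_combination -Real.sin_sq_add_cos_sq θ

section expressions

open RadicalExpr

/-- The right end `2 ^ (1 / 4) - 1` of the projection of the triangle to the real line. -/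
def width : RadicalExpr := sqrt (sqrt 2) - 1

/-- The squared radius `q²` of the circle carrying the lower side of the triangle. -/
def radiusSq : RadicalExpr := 3 + 2 * sqrt 2 - 2 * sqrt (4 + 3 * sqrt 2)

/-- The abscissa of the vertical segment indexed by the variable in `[0, 1]`. -/
def abscissa : RadicalExpr := width * var

/-- The square `q² - x²` of the lower endpoint of the vertical segment at abscissa `x`. -/
def lowerSq : RadicalExpr := radiusSq - abscissa * abscissa

/-- The square `1 - x² - 2 (1 + √2) x` of the upper endpoint of the vertical segment at `x`. -/
def upperSq : RadicalExpr := 1 - abscissa * abscissa - 2 * (1 + sqrt 2) * abscissa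

/-- The radicand `1 - 22 x²` of the ellipse on which the first factor of `φ₁` vanishes. -/
def ellipseSq : RadicalExpr := 1 - 22 * (abscissa * abscissa)

/-- The closed form of `triangleSlice` at `x = width * ξ`, times the Jacobian `width`. -/
def dirichletIntegrand : RadicalExpr :=
  let x := abscissa
  let r := sqrt lowerSq
  let s := sqrt ellipseSq
  let c := sqrt upperSq
  width * ((c - r) * const (1 / 3) * (hsymmTwo (r - (s + 1)) (2 * c - (s + 1) - r) +
    hsymmTwo (x * (r - (s + 1)) * rsqrt lowerSq)
      (x * (c - (s + 1)) * rsqrt lowerSq + 22 * (x * (c - r) * rsqrt ellipseSq))))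

theorem eval_hsymmTwo (e f : RadicalExpr) (t : ℝ) :
    (hsymmTwo e f).eval t = hsymmTwo (e.eval t) (f.eval t) := rfl

theorem eval_dirichletIntegrand {a q : ℝ} (ha : a = √√2 - 1)
    (hq : q ^ 2 = 3 + 2 * √2 - 2 * √(4 + 3 * √2)) (ξ : ℝ) :
    dirichletIntegrand.eval ξ = a * triangleSlice q (a * ξ) := by
  rw [triangleSlice, dirichletSlice_eq, ha, hq]
  simp only [dirichletIntegrand, lowerSq, upperSq, ellipseSq, abscissa, width, radiusSq,
    eval_hsymmTwo, eval_add, eval_sub, eval_mul, eval_sqrt, eval_rsqrt, eval_ofNat, eval_const,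
    eval_var, pow_two]
  push_cast
  ring

/-- A partition of `[0, 1]` into twelve cells. It clusters at `1` because `upperSq`, which has a
root just beyond `1`, makes the integrand vary fastest there. -/
def mesh (k : ℕ) : ℚ := 1 - (1 - k / 12) ^ 2

theorem mesh_certificate :
    (∀ k < 12, mesh k < mesh (k + 1) ∧
      (dirichletIntegrand.cellModel 6 (2 ^ 40) (mesh k) (mesh (k + 1))).valid = true) ∧
    ∑ k ∈ Finset.range 12, dirichletIntegrand.cellBound 6 (2 ^ 40) (mesh k) (mesh (k + 1)) <
      116469 / 1000000 := by
  decide +kernel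

theorem integral_dirichletIntegrand_lt :
    ∫ ξ in (0 : ℝ)..1, dirichletIntegrand.eval ξ < 116469 / 1000000 := by
  obtain ⟨hcells, hsum⟩ := mesh_certificate
  have h := integral_eval_le_sum_cellBound (by positivity) (fun k hk => (hcells k hk).1)
    (fun k hk => (hcells k hk).2)
  have h0 : mesh 0 = 0 := by norm_num [mesh]
  have h1 : mesh 12 = 1 := by norm_num [mesh]
  rw [h0, h1, Rat.cast_zero, Rat.cast_one] at h
  exact h.trans_lt ((Rat.cast_lt.mpr hsum).trans_eq (by norm_num))

end expressions

end Bolza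

/-- Upper bound `‖∇φ₁‖² < 116469/10⁶` for the hyperbolic Dirichlet integral of
the test function `φ₁(x,y) = (y − √(1−22x²) − 1)(y − √(q²−x²))` over the
hyperbolic (2,4,8) triangle `Ω_T` in the upper half-plane (Section 3.3 of the
paper); the integrand is the squared Euclidean gradient of `φ₁`. -/
theorem bolza_test_function_gradient_upper_bound
    (q a : ℝ)
    (hq : q = Real.sqrt (3 + 2 * Real.sqrt 2 - 2 * Real.sqrt (4 + 3 * Real.sqrt 2)))
    (ha : a = (2 : ℝ) ^ ((1 : ℝ) / 4) - 1)
    (c₁ c₂ : ℝ → ℝ)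
    (hc₁ : ∀ x : ℝ, c₁ x = Real.sqrt (q ^ 2 - x ^ 2))
    (hc₂ : ∀ x : ℝ, c₂ x = Real.sqrt ((1 / Real.sin (Real.pi / 8)) ^ 2 -
        (x + Real.cos (Real.pi / 8) / Real.sin (Real.pi / 8)) ^ 2)) :
    (∫ x in (0 : ℝ)..a, ∫ y in (c₁ x)..(c₂ x),
        ((2 * y - Real.sqrt (1 - 22 * x ^ 2) - 1 - Real.sqrt (q ^ 2 - x ^ 2)) ^ 2 +
          (x * (y - Real.sqrt (1 - 22 * x ^ 2) - 1) / Real.sqrt (q ^ 2 - x ^ 2) +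
            22 * x * (y - Real.sqrt (q ^ 2 - x ^ 2)) /
              Real.sqrt (1 - 22 * x ^ 2)) ^ 2)) <
      116469 / 1000000 := by
  have ha' : a = √√2 - 1 := by rw [ha, Bolza.two_rpow_one_div_four]
  have hq' : q ^ 2 = 3 + 2 * √2 - 2 * √(4 + 3 * √2) := by
    rw [hq, Real.sq_sqrt (sub_nonneg.mpr Bolza.two_mul_sqrt_four_add_le)]
  have hc₂' (x : ℝ) : c₂ x = √(1 - x ^ 2 - 2 * (1 + √2) * x) := by
    rw [hc₂, Bolza.one_div_sin_sq_sub_add_cot_sq Bolza.sin_pi_div_eight_pos.ne',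
      Bolza.cos_div_sin_pi_div_eight, pow_two]
  calc _ = ∫ x in (0 : ℝ)..a, Bolza.triangleSlice q x := by
        simp only [hc₁, hc₂', Bolza.triangleSlice, Bolza.dirichletSlice]
    _ = ∫ ξ in (0 : ℝ)..1, a * Bolza.triangleSlice q (a * ξ) := by
        rw [integral_const_mul, mul_integral_comp_mul_left, mul_zero, mul_one]
    _ = ∫ ξ in (0 : ℝ)..1, Bolza.dirichletIntegrand.eval ξ := by
        simp only [Bolza.eval_dirichletIntegrand ha' hq']
    _ < 116469 / 1000000 := Bolza.integral_dirichletIntegrand_lt
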